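/- Let p be an odd prime and G a powerful finite p-group generated by a₁,…,a_d. Then G = ⟨a₁⟩⟨a₂⟩⋯⟨a_d⟩, i.e., every element of G is a product x₁⋯x_d with each x_i a power of a_i. -/

import Mathlib

/-!
Write `N^p` for the subgroup generated by the `p`-th powers of elements of `N`, and put `P₀ = G`,
`Pₖ₊₁ = Pₖ^p`. The whole argument rests on one identity: if `⁅y, x⁆` commutes with `x` and `y` and
has order dividing the odd prime `p`, then `(x * y) ^ p = x ^ p * y ^ p`. It is used twice.

* If `⁅N, G⁆ ≤ N^p`, then `⁅N^p, G⁆ ≤ (N^p)^p`. By nilpotency it suffices to prove this modulo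
  `⁅N^p, G, G⁆`, and there the identity, applied to `x ∈ N` and `x⁻¹ * (g * x * g⁻¹) ∈ N^p`, shows
  that `x ^ p` is central. Hence `⁅Pₖ, G⁆ ≤ Pₖ₊₁` for all `k`.
* The `p`-th power map is multiplicative from `Pₖ` to `Pₖ₊₁ / Pₖ₊₂`, so that `Pₖ` is generated
  modulo `Pₖ₊₁` by the elements `aᵢ ^ p ^ k`.

A nontrivial finite `p`-group is not generated by its `p`-th powers, so the series `Pₖ` reaches the
trivial group. Its last nontrivial term is central and generated by powers of the `aᵢ`, hence some
`z ∈ ⟨aᵢ⟩` is central and nontrivial. By induction on the order, the theorem holds for `G ⧸ ⟨z⟩`;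
the error is a power of `z`, which, being central, can be moved into the `i`-th factor.
-/

namespace PowerfulPGroup

open scoped commutatorElement

/-! ### Subgroups of `p`-th powers -/

/-- The subgroup generated by the `p`-th powers of the elements of `N`. -/
def pPow {G : Type*} [Group G] (p : ℕ) (N : Subgroup G) : Subgroup G :=
  Subgroup.closure {x : G | ∃ g ∈ N, g ^ p = x}

/-- The descending series `Pₖ` with `P₀ = G` and `Pₖ₊₁ = Pₖ^p`. -/
def pSeries (p : ℕ) (G : Type*) [Group G] : ℕ → Subgroup G
  | 0 => ⊤
  | k + 1 => pPow p (pSeries p G k)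

section General

variable {G : Type*} [Group G]

lemma pow_mem_pPow (p : ℕ) {N : Subgroup G} {x : G} (hx : x ∈ N) : x ^ p ∈ pPow p N :=
  Subgroup.subset_closure ⟨x, hx, rfl⟩

lemma pPow_le (p : ℕ) (N : Subgroup G) : pPow p N ≤ N := by
  refine (Subgroup.closure_le _).2 ?_
  rintro _ ⟨g, hg, rfl⟩
  exact N.pow_mem hg p

instance pPow_normal (p : ℕ) (N : Subgroup G) [hN : N.Normal] : (pPow p N).Normal := by
  refine ⟨fun n hn g => ?_⟩
  have h : pPow p N ≤ (pPow p N).comap (MulAut.conj g).toMonoidHom := by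
    refine (Subgroup.closure_le _).2 ?_
    rintro _ ⟨x, hx, rfl⟩
    change MulAut.conj g (x ^ p) ∈ pPow p N
    rw [map_pow]
    exact pow_mem_pPow p (hN.conj_mem x hx g)
  exact h hn

instance pSeries_normal (p : ℕ) (k : ℕ) : (pSeries p G k).Normal := by
  induction k with
  | zero => exact Subgroup.normal_of_characteristic ⊤
  | succ k ih => exact pPow_normal p _

/-! ### Powers of a product with central commutator -/

/-- The collection formula `(xy)ⁿ = [y, x]^(n choose 2) xⁿ yⁿ` for a central commutator. -/
lemma mul_pow_of_comm {x y z : G} (hz : y * x = z * (x * y)) (hzx : Commute z x)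
    (hzy : Commute z y) (n : ℕ) : (x * y) ^ n = z ^ (n.choose 2) * (x ^ n * y ^ n) := by
  have h1 : ∀ n : ℕ, y ^ n * x = z ^ n * (x * y ^ n) := by
    intro n
    induction n with
    | zero => simp
    | succ n ih =>
      calc y ^ (n + 1) * x = y * (y ^ n * x) := by rw [pow_succ', mul_assoc]
        _ = (y * z ^ n) * (x * y ^ n) := by rw [ih, mul_assoc]
        _ = z ^ n * (y * x) * y ^ n := by rw [← (hzy.pow_left n).eq]; simp only [mul_assoc]
        _ = z ^ (n + 1) * (x * y ^ (n + 1)) := by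
          rw [hz, pow_succ z, pow_succ' y]; simp only [mul_assoc]
  induction n with
  | zero => simp
  | succ n ih =>
    have hc : (n + 1).choose 2 = n.choose 2 + n := by
      rw [Nat.choose_succ_succ' n 1, Nat.choose_one_right, add_comm]
    calc (x * y) ^ (n + 1) = z ^ (n.choose 2) * (x ^ n * (y ^ n * x) * y) := by
          rw [pow_succ, ih]; simp only [mul_assoc]
      _ = z ^ (n.choose 2) * ((x ^ n * z ^ n) * (x * y ^ n) * y) := by
          rw [h1]; simp only [mul_assoc]
      _ = z ^ ((n + 1).choose 2) * (x ^ (n + 1) * y ^ (n + 1)) := by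
          rw [← ((hzx.pow_left n).pow_right n).eq, hc, pow_add, pow_succ x, pow_succ y]
          simp only [mul_assoc]

lemma mul_pow_prime {p : ℕ} (hp : p.Prime) (hodd : Odd p) {x y : G} (hx : Commute ⁅y, x⁆ x)
    (hy : Commute ⁅y, x⁆ y) (h : ⁅y, x⁆ ^ p = 1) : (x * y) ^ p = x ^ p * y ^ p := by
  have h2 : 2 < p := by
    rcases hp.two_le.lt_or_eq with h | h
    · exact h
    · subst h; exact absurd hodd (by decide)
  obtain ⟨m, hm⟩ := hp.dvd_choose_self two_ne_zero h2
  rw [mul_pow_of_comm (z := ⁅y, x⁆) (by simp [commutatorElement_def, mul_assoc]) hx hy p, hm,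
    pow_mul, h, one_pow, one_mul]

/-- A relative version of `mul_pow_prime`, modulo a normal subgroup `K`. -/
lemma mul_pow_prime_mod {p : ℕ} (hp : p.Prime) (hodd : Odd p) (K : Subgroup G) [K.Normal] {x y : G}
    (hc : ∀ g : G, ⁅⁅y, x⁆, g⁆ ∈ K) (h : ⁅y, x⁆ ^ p ∈ K) :
    (((x * y) ^ p : G) : G ⧸ K) = (x ^ p * y ^ p : G) := by
  have hcomm : ∀ g : G, Commute ⁅(y : G ⧸ K), (x : G ⧸ K)⁆ (g : G ⧸ K) := by
    intro g
    rw [← commutatorElement_eq_one_iff_commute]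
    exact (QuotientGroup.eq_one_iff _).2 (hc g)
  exact mul_pow_prime (G := G ⧸ K) hp hodd (hcomm x) (hcomm y) ((QuotientGroup.eq_one_iff _).2 h)

/-! ### Commutators along the series of `p`-th powers -/

/-- In a nilpotent group, the term `⁅N, G⁆` may be dropped: modulo `L`, the subgroup `N` lies in
every term of the lower central series. -/
lemma le_of_le_sup_commutator [Group.IsNilpotent G] (N L : Subgroup G) [L.Normal]
    (h : N ≤ L ⊔ ⁅N, ⊤⁆) : N ≤ L := by
  let f := QuotientGroup.mk' L
  have hf : (⊤ : Subgroup G).map f = ⊤ :=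
    Subgroup.map_top_of_surjective f (QuotientGroup.mk'_surjective L)
  have h1 : N.map f ≤ ⁅N.map f, ⊤⁆ := by
    have := Subgroup.map_mono (f := f) h
    rw [Subgroup.map_sup, Subgroup.map_commutator, hf, QuotientGroup.map_mk'_self, bot_sup_eq]
      at this
    exact this
  have h2 : ∀ n, N.map f ≤ (⊤ : Subgroup (G ⧸ L)).lowerCentralSeries n := by
    intro n
    induction n with
    | zero => exact le_top
    | succ n ih => exact h1.trans (Subgroup.commutator_mono ih le_rfl)
  obtain ⟨n, hn⟩ := Subgroup.nilpotent_iff_lowerCentralSeries.1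
    (inferInstance : Group.IsNilpotent (G ⧸ L))
  have h3 := h2 n
  rw [hn, Subgroup.map_le_iff_le_comap] at h3
  simpa [f, MonoidHom.comap_bot] using h3

/-- If `N` is powerfully embedded in `G`, then so is `N^p`. -/
lemma commutator_pPow_le {p : ℕ} (hp : p.Prime) (hodd : Odd p) [Group.IsNilpotent G]
    (N : Subgroup G) [N.Normal] (h : ⁅N, ⊤⁆ ≤ pPow p N) :
    ⁅pPow p N, ⊤⁆ ≤ pPow p (pPow p N) := by
  apply le_of_le_sup_commutator
  set M := pPow p N with hM
  set K := pPow p M ⊔ ⁅⁅M, (⊤ : Subgroup G)⁆, (⊤ : Subgroup G)⁆ with hK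
  have hMcen : M ≤ (Subgroup.center (G ⧸ K)).comap (QuotientGroup.mk' K) := by
    refine (Subgroup.closure_le _).2 ?_
    rintro _ ⟨x, hx, rfl⟩
    refine Subgroup.mem_center_iff.2 fun q => ?_
    obtain ⟨g, rfl⟩ := QuotientGroup.mk_surjective q
    -- `c` measures the failure of `x` and `g` to commute, in the form `g * x * g⁻¹ = x * c`
    set c := ⁅x⁻¹, g⁆ with hc
    have hcM : c ∈ M := h (Subgroup.commutator_mem_commutator (N.inv_mem hx) trivial)
    have hcx : ⁅c, x⁆ ∈ ⁅M, (⊤ : Subgroup G)⁆ := Subgroup.commutator_mem_commutator hcM trivial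
    have hle : ⁅M, (⊤ : Subgroup G)⁆ ≤ M := Subgroup.commutator_le_left _ _
    have key := mul_pow_prime_mod hp hodd K (x := x) (y := c)
      (fun g => Subgroup.mem_sup_right (Subgroup.commutator_mem_commutator hcx trivial))
      (Subgroup.mem_sup_left (pow_mem_pPow p (hle hcx)))
    have hcp : ((c ^ p : G) : G ⧸ K) = 1 :=
      (QuotientGroup.eq_one_iff _).2 (Subgroup.mem_sup_left (pow_mem_pPow p hcM))
    have hxc : x * c = g * x * g⁻¹ := by simp [hc, commutatorElement_def, mul_assoc]
    rw [hxc, conj_pow, QuotientGroup.mk_mul _ (x ^ p), hcp, mul_one, QuotientGroup.mk_mul,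
      QuotientGroup.mk_inv, mul_inv_eq_iff_eq_mul, QuotientGroup.mk_mul] at key
    exact key
  refine Subgroup.commutator_le.2 fun m hm g _ => ?_
  have h1 := Subgroup.mem_center_iff.1 (hMcen hm) (g : G ⧸ K)
  refine (QuotientGroup.eq_one_iff _).1 ?_
  exact commutatorElement_eq_one_iff_mul_comm.2 h1.symm

lemma commutator_pSeries_le {p : ℕ} (hp : p.Prime) (hodd : Odd p) [Group.IsNilpotent G]
    (h : ⁅(⊤ : Subgroup G), (⊤ : Subgroup G)⁆ ≤ pPow p ⊤) (k : ℕ) :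
    ⁅pSeries p G k, (⊤ : Subgroup G)⁆ ≤ pSeries p G (k + 1) := by
  induction k with
  | zero => exact h
  | succ k ih => exact commutator_pPow_le hp hodd _ ih

lemma pow_pow_mem_pSeries (p : ℕ) (g : G) (k : ℕ) : g ^ p ^ k ∈ pSeries p G k := by
  induction k with
  | zero => trivial
  | succ k ih =>
    rw [pow_succ, pow_mul]
    exact pow_mem_pPow p ih

/-! ### Generators of the factors of the series -/

/-- The `p`-th power map is multiplicative from `Pₖ` to `Pₖ₊₁ / Pₖ₊₂`. -/
lemma mul_pow_pSeries {p : ℕ} (hp : p.Prime) (hodd : Odd p) [Group.IsNilpotent G]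
    (h : ⁅(⊤ : Subgroup G), (⊤ : Subgroup G)⁆ ≤ pPow p ⊤) (k : ℕ) {x y : G} (hy : y ∈ pSeries p G k) :
    (((x * y) ^ p : G) : G ⧸ pSeries p G (k + 2)) = (x ^ p * y ^ p : G) := by
  have hyx : ⁅y, x⁆ ∈ pSeries p G (k + 1) :=
    commutator_pSeries_le hp hodd h k (Subgroup.commutator_mem_commutator hy trivial)
  exact mul_pow_prime_mod hp hodd _
    (fun g => commutator_pSeries_le hp hodd h (k + 1)
      (Subgroup.commutator_mem_commutator hyx trivial))
    (pow_mem_pPow p hyx)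

/-- `Pₖ` is generated modulo `Pₖ₊₁` by the `p ^ k`-th powers of the generators of `G`. -/
lemma pSeries_le_closure_sup {p : ℕ} (hp : p.Prime) (hodd : Odd p) [Group.IsNilpotent G]
    (h : ⁅(⊤ : Subgroup G), (⊤ : Subgroup G)⁆ ≤ pPow p ⊤) {ι : Type*} (a : ι → G)
    (ha : Subgroup.closure (Set.range a) = ⊤) (k : ℕ) :
    pSeries p G k ≤ Subgroup.closure (Set.range fun i => a i ^ p ^ k) ⊔ pSeries p G (k + 1) := by
  induction k with
  | zero => simp [ha]
  | succ k ih =>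
    set C := Subgroup.closure (Set.range fun i => a i ^ p ^ k) with hC
    set D := Subgroup.closure (Set.range fun i => a i ^ p ^ (k + 1)) with hD
    have hCP : C ≤ pSeries p G k := by
      refine (Subgroup.closure_le _).2 ?_
      rintro _ ⟨i, rfl⟩
      exact pow_pow_mem_pSeries p (a i) k
    -- membership in `D ⊔ Pₖ₊₂` only depends on the class modulo `Pₖ₊₂`
    have hmod : ∀ u v : G, (u : G ⧸ pSeries p G (k + 2)) = v → v ∈ D ⊔ pSeries p G (k + 2) →
        u ∈ D ⊔ pSeries p G (k + 2) := by
      intro u v huv hv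
      have := Subgroup.mul_mem _ hv
        (Subgroup.mem_sup_right (S := D) (QuotientGroup.eq.1 huv.symm))
      simpa using this
    have hCpow : ∀ w ∈ C, w ^ p ∈ D ⊔ pSeries p G (k + 2) := by
      intro w hw
      induction hw using Subgroup.closure_induction with
      | mem x hx =>
        obtain ⟨i, rfl⟩ := hx
        refine Subgroup.mem_sup_left (Subgroup.subset_closure ⟨i, ?_⟩)
        simp [pow_succ, pow_mul]
      | one => simp
      | mul x y hx hy ihx ihy =>
        exact hmod _ _ (mul_pow_pSeries hp hodd h k (hCP hy)) (Subgroup.mul_mem _ ihx ihy)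
      | inv x hx ihx => rw [inv_pow]; exact Subgroup.inv_mem _ ihx
    refine (Subgroup.closure_le _).2 ?_
    rintro _ ⟨x, hx, rfl⟩
    obtain ⟨w, hw, t, ht, rfl⟩ := Subgroup.mem_sup_of_normal_right.1 (ih hx)
    exact hmod _ _ (mul_pow_pSeries hp hodd h k (pPow_le p _ ht))
      (Subgroup.mul_mem _ (hCpow w hw) (Subgroup.mem_sup_right (pow_mem_pPow p ht)))

/-! ### The series terminates -/

/-- A nontrivial finite `p`-group is not generated by its `p`-th powers: otherwise the `p`-th power
map would be onto on its abelianization, which is a nontrivial `p`-group. -/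
lemma pPow_top_ne_top {p : ℕ} (hp : p.Prime) [Finite G] [Nontrivial G] (hG : IsPGroup p G) :
    pPow p (⊤ : Subgroup G) ≠ ⊤ := by
  intro htop
  have : Fact p.Prime := ⟨hp⟩
  have := hG.isNilpotent
  have hsurj : Function.Surjective (powMonoidHom p : Abelianization G →* Abelianization G) := by
    have h1 : pPow p (⊤ : Subgroup G) ≤
        (powMonoidHom p : Abelianization G →* Abelianization G).range.comap Abelianization.of := by
      refine (Subgroup.closure_le _).2 ?_
      rintro _ ⟨x, -, rfl⟩
      exact ⟨Abelianization.of x, by simp⟩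
    intro q
    obtain ⟨g, rfl⟩ := QuotientGroup.mk_surjective q
    exact h1 (htop.ge (Subgroup.mem_top g))
  have hinj := Finite.injective_iff_surjective.2 hsurj
  have hA : IsPGroup p (Abelianization G) := hG.to_quotient _
  have htriv : ∀ q : Abelianization G, q = 1 := by
    intro q
    obtain ⟨k, hk⟩ := hA q
    induction k with
    | zero => simpa using hk
    | succ k ih =>
      refine ih (hinj ?_)
      simpa [pow_succ, pow_mul] using hk
  have hlt := Group.IsSolvable.commutator_lt_top_of_nontrivial G
  refine hlt.ne (eq_top_iff.2 fun g _ => ?_)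
  exact (QuotientGroup.eq_one_iff g).1 (htriv (Abelianization.of g))

lemma pPow_lt {p : ℕ} (hp : p.Prime) [Finite G] (hG : IsPGroup p G) {N : Subgroup G}
    (hN : N ≠ ⊥) : pPow p N < N := by
  refine lt_of_le_of_ne (pPow_le p N) fun heq => ?_
  have := (Subgroup.nontrivial_iff_ne_bot N).2 hN
  refine pPow_top_ne_top hp (hG.to_subgroup N) (eq_top_iff.2 ?_)
  have h1 : pPow p N ≤ (pPow p (⊤ : Subgroup N)).map N.subtype := by
    refine (Subgroup.closure_le _).2 ?_
    rintro _ ⟨x, hx, rfl⟩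
    exact ⟨⟨x, hx⟩ ^ p, pow_mem_pPow p trivial, rfl⟩
  rintro ⟨x, hx⟩ -
  obtain ⟨y, hy, hyx⟩ := h1 (heq.symm ▸ hx : x ∈ pPow p N)
  have : y = ⟨x, hx⟩ := Subtype.ext hyx
  exact this ▸ hy

lemma exists_pSeries_eq_bot {p : ℕ} (hp : p.Prime) [Finite G] (hG : IsPGroup p G) :
    ∃ k, pSeries p G k = ⊥ := by
  by_contra! hne
  have hanti : StrictAnti (pSeries p G) := strictAnti_nat_of_succ_lt fun k => pPow_lt hp hG (hne k)
  exact not_injective_infinite_finite _ hanti.injective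

/-! ### Induction over a central cyclic subgroup -/

/-- In a nontrivial powerful `p`-group, some generator has a nontrivial central power. -/
lemma exists_central_pow {p : ℕ} (hp : p.Prime) (hodd : Odd p) [Finite G] [Nontrivial G]
    (hG : IsPGroup p G) (h : ⁅(⊤ : Subgroup G), (⊤ : Subgroup G)⁆ ≤ pPow p ⊤) {ι : Type*} (a : ι → G)
    (ha : Subgroup.closure (Set.range a) = ⊤) :
    ∃ (i : ι) (m : ℕ), a i ^ m ≠ 1 ∧ a i ^ m ∈ Subgroup.center G := by
  classical
  have : Fact p.Prime := ⟨hp⟩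
  have := hG.isNilpotent
  have hex := exists_pSeries_eq_bot hp hG
  obtain ⟨e, he⟩ : ∃ e, Nat.find hex = e + 1 := by
    refine Nat.exists_eq_succ_of_ne_zero fun h0 => ?_
    have := Nat.find_spec hex
    rw [h0] at this
    exact top_ne_bot this
  have hbot : pSeries p G (e + 1) = ⊥ := he ▸ Nat.find_spec hex
  have hne : pSeries p G e ≠ ⊥ := Nat.find_min hex (by omega)
  have hgen := pSeries_le_closure_sup hp hodd h a ha e
  have hcomm := commutator_pSeries_le hp hodd h e
  rw [hbot] at hgen hcomm
  rw [sup_bot_eq] at hgen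
  obtain ⟨i, hi⟩ : ∃ i, a i ^ p ^ e ≠ 1 := by
    by_contra! hall
    refine hne (le_bot_iff.1 (hgen.trans ((Subgroup.closure_le _).2 ?_)))
    rintro _ ⟨i, rfl⟩
    simp [hall i]
  refine ⟨i, p ^ e, hi, Subgroup.mem_center_iff.2 fun g => ?_⟩
  have := hcomm (Subgroup.commutator_mem_commutator (pow_pow_mem_pSeries p (a i) e)
    (Subgroup.mem_top g))
  exact (commutatorElement_eq_one_iff_mul_comm.1 (Subgroup.mem_bot.1 this)).symm

/-- A central element can be moved into any factor of a product. -/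
lemma prod_ofFn_update_mul {d : ℕ} (f : Fin d → G) (i : Fin d) {c : G}
    (hc : c ∈ Subgroup.center G) :
    (List.ofFn (Function.update f i (f i * c))).prod = (List.ofFn f).prod * c := by
  induction d with
  | zero => exact i.elim0
  | succ d ih =>
    rw [List.ofFn_succ, List.ofFn_succ, List.prod_cons, List.prod_cons]
    refine Fin.cases ?_ (fun j => ?_) i
    · have : ∀ j : Fin d, Function.update f 0 (f 0 * c) j.succ = f j.succ := fun j =>
        Function.update_of_ne (Fin.succ_ne_zero j) _ _
      simp only [this, Function.update_self]
      rw [mul_assoc, mul_assoc, Subgroup.mem_center_iff.1 hc]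
    · have h1 : (fun k : Fin d => Function.update f j.succ (f j.succ * c) k.succ) =
          Function.update (fun k : Fin d => f k.succ) j (f j.succ * c) := by
        funext k
        by_cases hk : k = j
        · subst hk; simp
        · rw [Function.update_of_ne hk, Function.update_of_ne (by simpa using hk)]
      rw [h1, ih (fun k => f k.succ) j, Function.update_of_ne (Fin.succ_ne_zero j).symm, mul_assoc]

lemma powerful_quotient (p : ℕ) (K : Subgroup G) [K.Normal]
    (h : ⁅(⊤ : Subgroup G), (⊤ : Subgroup G)⁆ ≤ pPow p ⊤) : ⁅(⊤ : Subgroup (G ⧸ K)), (⊤ : Subgroup (G ⧸ K))⁆ ≤ pPow p ⊤ := by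
  have hf : (⊤ : Subgroup G).map (QuotientGroup.mk' K) = ⊤ :=
    Subgroup.map_top_of_surjective _ (QuotientGroup.mk'_surjective K)
  have h1 := Subgroup.map_mono (f := QuotientGroup.mk' K) h
  rw [Subgroup.map_commutator, hf] at h1
  refine h1.trans (Subgroup.map_le_iff_le_comap.2 ((Subgroup.closure_le _).2 ?_))
  rintro _ ⟨x, -, rfl⟩
  exact pow_mem_pPow p (Subgroup.mem_top (x : G ⧸ K))

end General

/-- The theorem in terms of `pPow`, by induction on a bound `n` for the order of the group. -/
lemma exists_prod (p : ℕ) (hp : p.Prime) (hodd : Odd p) (d n : ℕ) :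
    ∀ (G : Type*) [Group G] [Finite G], Nat.card G ≤ n → IsPGroup p G →
      ⁅(⊤ : Subgroup G), (⊤ : Subgroup G)⁆ ≤ pPow p ⊤ →
      ∀ a : Fin d → G, Subgroup.closure (Set.range a) = ⊤ →
        ∀ g : G, ∃ m : Fin d → ℤ, g = (List.ofFn fun i => a i ^ m i).prod := by
  induction n with
  | zero =>
    intro G _ _ hn
    exact absurd hn (by simpa using Nat.card_pos.ne')
  | succ n ih =>
    intro G _ _ hn hG h a ha g
    rcases subsingleton_or_nontrivial G with hs | hs
    · exact ⟨0, Subsingleton.elim _ _⟩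
    obtain ⟨i, m, hne, hcen⟩ := exists_central_pow hp hodd hG h a ha
    set K := Subgroup.zpowers (a i ^ m) with hK
    have hKcen : K ≤ Subgroup.center G := by simpa [hK] using hcen
    have : K.Normal := ⟨fun x hx y => by
      rwa [Subgroup.mem_center_iff.1 (hKcen hx) y, mul_inv_cancel_right]⟩
    have hcard : Nat.card (G ⧸ K) ≤ n := by
      have h1 := Subgroup.card_eq_card_quotient_mul_card_subgroup K
      have h2 : 1 < Nat.card K := Subgroup.one_lt_card_iff_ne_bot K |>.2 (by simpa [hK] using hne)
      have h3 : 0 < Nat.card (G ⧸ K) := Nat.card_pos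
      nlinarith
    have ha' : Subgroup.closure (Set.range fun j => (a j : G ⧸ K)) = ⊤ := by
      have h1 := congrArg (Subgroup.map (QuotientGroup.mk' K)) ha
      rw [MonoidHom.map_closure, ← Set.range_comp,
        Subgroup.map_top_of_surjective _ (QuotientGroup.mk'_surjective K)] at h1
      exact h1
    obtain ⟨r, hr⟩ := ih (G ⧸ K) hcard (hG.to_quotient K) (powerful_quotient p K h) _ ha' g
    set f : Fin d → G := fun j => a j ^ r j with hf
    have hr' : (((List.ofFn f).prod : G) : G ⧸ K) = g := by
      rw [hr]
      change QuotientGroup.mk' K (List.ofFn f).prod = _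
      rw [map_list_prod, List.map_ofFn]
      rfl
    obtain ⟨t, ht⟩ := Subgroup.mem_zpowers_iff.1 (QuotientGroup.eq.1 hr')
    refine ⟨Function.update r i (r i + m * t), ?_⟩
    have hfun : (fun j => a j ^ Function.update r i (r i + m * t) j) =
        Function.update f i (f i * (a i ^ m) ^ t) := by
      funext j
      by_cases hj : j = i
      · subst hj
        simp [hf, zpow_add, zpow_mul]
      · simp [hf, Function.update_of_ne hj]
    rw [hfun, prod_ofFn_update_mul f i (Subgroup.zpow_mem _ hcen t), ht, mul_inv_cancel_left]

end PowerfulPGroup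

/-- A powerful finite `p`-group (`p` odd) generated by `a 0, …, a (d-1)` is the
product of the cyclic subgroups `⟨a i⟩`. -/
theorem powerful_eq_product_of_cyclic
    (p : ℕ) (hp : p.Prime) (hodd : Odd p)
    (G : Type*) [Group G] [Finite G] (hpG : IsPGroup p G)
    (hpow : ⁅(⊤ : Subgroup G), (⊤ : Subgroup G)⁆ ≤ Subgroup.closure {x : G | ∃ g : G, g ^ p = x})
    (d : ℕ) (a : Fin d → G) (ha : Subgroup.closure (Set.range a) = ⊤) :
    ∀ g : G, ∃ x : Fin d → G,
      (∀ i, x i ∈ Subgroup.zpowers (a i)) ∧ g = (List.ofFn x).prod := by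
  intro g
  have h : ⁅(⊤ : Subgroup G), (⊤ : Subgroup G)⁆ ≤ PowerfulPGroup.pPow p ⊤ := by
    simpa [PowerfulPGroup.pPow] using hpow
  obtain ⟨m, hm⟩ := PowerfulPGroup.exists_prod p hp hodd d _ G le_rfl hpG h a ha g
  exact ⟨fun i => a i ^ m i, fun i => Subgroup.zpow_mem_zpowers (a i) (m i), hm⟩
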